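/- Assume the number-field distortion setup. Then for every integer k ≥ 1 and every 1 ≤ j ≤ J, Σ_{x ∈ O_K/Q} α_j(x)^k P_{j−1}(x) ≤ s^k · Σ_{1 ≤ r_1, …, r_k ≤ ν_j} Σ_{(H_1, …, H_k)} [ 1/( N(H_1 ∩ ⋯ ∩ H_k) · N(p_j)^{r_1 + ⋯ + r_k} ) ] · ∏_{1 ≤ i ≤ j−1, p_i | H_1 ∩ ⋯ ∩ H_k} (1 − δ_i)^{−1}, where the inner sum is over k-tuples of ideals H_1, …, H_k of O_K dividing Q_{j−1} and satisfying N(H_ℓ · p_j^{r_ℓ}) ≥ N(I_1) for every 1 ≤ ℓ ≤ k. -/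

import Mathlib

/-!
Let `E_A f` be the average of `f` over the cosets of `A`. Then `α_j` is `E_{Q_{j-1}}` applied to the
indicator of `𝓑_j`, and the `j`-th distortion step multiplies `P_{j-1}` by a weight that is an
affine function of that indicator and equals `1` where the indicator is replaced by `α_j`. Since
`P_{j-1}` and `α_j` are periodic modulo `Q_{j-1}`, the step preserves averages modulo `Q_{j-1}`; and
pointwise it costs at most a factor `(1 - δ_j)⁻¹`. By induction on `m`, a residue class modulo
`H ∣ Q_m` has `P_m`-mass at most `N(H)⁻¹ ∏ (1 - δ_i)⁻¹`, the product being over `p_i ∣ H`.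

A class modulo `H * p_j ^ r` with `H ∣ Q_{j-1}` covers the proportion `N(p_j)^(-r)` of every fibre
over `O_K / Q_{j-1}` that lies in the underlying class modulo `H`, and none of the others. So `α_j`
is at most a sum of weighted indicators of classes modulo such `H`. In its `k`-th power, a `k`-tuple
of congruences modulo `H_1, …, H_k` has no solution or defines a class modulo `H_1 ∩ ⋯ ∩ H_k`, whose
mass has just been estimated, and each choice of the `r_l` and `H_l` arises from at most `s ^ k`
tuples of congruence classes.
-/

set_option maxHeartbeats 1000000
set_option synthInstance.maxHeartbeats 1000000

open scoped Classical
open NumberField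

/-- `p` is the unique prime ideal factor of `I` of largest norm. -/
def IsPmin {K : Type*} [Field K] [NumberField K] (I p : Ideal (𝓞 K)) : Prop :=
  p.IsPrime ∧ p ∣ I ∧ ∀ q : Ideal (𝓞 K), q.IsPrime → q ∣ I → q ≠ p →
    Ideal.absNorm q < Ideal.absNorm p

/-- A nonzero proper ideal is distinguishable if it has a unique prime factor of largest norm. -/
def Distinguishable {K : Type*} [Field K] [NumberField K] (I : Ideal (𝓞 K)) : Prop :=
  I ≠ ⊥ ∧ I ≠ ⊤ ∧ ∃ p : Ideal (𝓞 K), IsPmin I p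

open scoped BigOperators

section CosetAverage

variable {S G : Type*} [Ring S] [AddCommGroup G] [Module S G] [Fintype G]

/-- The average of `f` over the coset `x + A`. As an operator on functions it is the conditional
expectation given the residue class modulo `A`. -/
noncomputable def cosetAvg (A : Submodule S G) (f : G → ℝ) (x : G) : ℝ :=
  𝔼 v : A, f (x + v)

variable {A A' : Submodule S G} {f g : G → ℝ}

lemma cosetAvg_mono (h : ∀ y, f y ≤ g y) (x : G) : cosetAvg A f x ≤ cosetAvg A g x :=
  Finset.expect_le_expect fun _ _ => h _

lemma cosetAvg_mul_of_periodic (hf : ∀ v ∈ A, Function.Periodic f v) (g : G → ℝ) (x : G) :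
    cosetAvg A (fun y => f y * g y) x = f x * cosetAvg A g x := by
  rw [cosetAvg, cosetAvg, Finset.mul_expect]
  exact Finset.expect_congr rfl fun v _ => by rw [hf v v.2]

lemma cosetAvg_of_periodic (hf : ∀ v ∈ A, Function.Periodic f v) (x : G) :
    cosetAvg A f x = f x :=
  (Finset.expect_congr rfl fun (v : A) _ => hf v v.2 x).trans (Fintype.expect_const _)

lemma periodic_cosetAvg (A : Submodule S G) (f : G → ℝ) :
    ∀ v ∈ A, Function.Periodic (cosetAvg A f) v := fun v hv x =>
  Fintype.expect_equiv (Equiv.addLeft ⟨v, hv⟩) _ _ fun w => by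
    simp only [Equiv.coe_addLeft, Submodule.coe_add, add_assoc]

lemma periodic_cosetAvg_of_periodic {v : G} (hf : Function.Periodic f v) :
    Function.Periodic (cosetAvg A f) v := fun x =>
  Finset.expect_congr rfl fun w _ => by rw [add_right_comm, hf]

lemma cosetAvg_cosetAvg_of_le (h : A ≤ A') (f : G → ℝ) (x : G) :
    cosetAvg A' (cosetAvg A f) x = cosetAvg A' f x := by
  have htranslate (v : A) : 𝔼 w : A', f (x + w + v) = cosetAvg A' f x :=
    Fintype.expect_equiv (Equiv.addRight ⟨v, h v.2⟩) _ _ fun w => by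
      simp only [Equiv.coe_addRight, Submodule.coe_add, add_assoc]
  calc cosetAvg A' (cosetAvg A f) x
      = 𝔼 v : A, 𝔼 w : A', f (x + w + v) := Finset.expect_comm ..
    _ = 𝔼 _v : A, cosetAvg A' f x := Finset.expect_congr rfl fun v _ => htranslate v
    _ = cosetAvg A' f x := Fintype.expect_const _

lemma cosetAvg_sup_of_periodic (hf : ∀ v ∈ A', Function.Periodic f v) (x : G) :
    cosetAvg (A ⊔ A') f x = cosetAvg A f x := by
  rw [← cosetAvg_cosetAvg_of_le le_sup_left, cosetAvg_of_periodic]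
  intro u hu
  obtain ⟨a, ha, v, hv, rfl⟩ := Submodule.mem_sup.1 hu
  exact (periodic_cosetAvg A f a ha).add_period (periodic_cosetAvg_of_periodic (hf v hv))

lemma sum_coset_eq_card_mul_cosetAvg (A : Submodule S G) (f : G → ℝ) (x : G) :
    ∑ y with y - x ∈ A, f y = Nat.card A * cosetAvg A f x := by
  rw [cosetAvg, Nat.card_eq_fintype_card, Fintype.card_mul_expect]
  refine Finset.sum_bij' (fun y hy => ⟨y - x, (Finset.mem_filter.1 hy).2⟩) (fun v _ => x + v)
    ?_ ?_ ?_ ?_ ?_ <;> simp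

lemma card_coset (A : Submodule S G) (x : G) :
    (Finset.univ.filter fun y => y - x ∈ A).card = Nat.card A := by
  have h := sum_coset_eq_card_mul_cosetAvg A 1 x
  rw [cosetAvg_of_periodic fun _ _ _ => rfl] at h
  simpa [-Nat.card_eq_fintype_card] using h

lemma cosetAvg_indicator_one (A : Submodule S G) (B : Set G) (x : G) :
    cosetAvg A (B.indicator 1) x =
      ((Finset.univ.filter fun y => y - x ∈ A ∧ y ∈ B).card : ℝ) / Nat.card A := by
  have hcard : (Nat.card A : ℝ) ≠ 0 := Nat.cast_ne_zero.2 Nat.card_pos.ne'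
  rw [eq_div_iff hcard, mul_comm, ← sum_coset_eq_card_mul_cosetAvg, Finset.card_filter]
  simp [Finset.sum_filter, ite_and, Set.indicator_apply, -Finset.sum_boole]

lemma cosetAvg_indicator_coset (A I : Submodule S G) (b x : G) :
    cosetAvg A ({y | y - b ∈ I}.indicator 1) x =
      if x - b ∈ A ⊔ I then (Nat.card I : ℝ) / Nat.card ↥(A ⊔ I) else 0 := by
  have hper : ∀ v ∈ I, Function.Periodic ({y | y - b ∈ I}.indicator (1 : G → ℝ)) v := by
    intro v hv y
    simp only [Set.indicator_apply, Set.mem_ofPred_eq, Pi.one_apply, add_sub_right_comm,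
      I.add_mem_iff_left hv]
  rw [← cosetAvg_sup_of_periodic hper, cosetAvg_indicator_one]
  split_ifs with hx
  · rw [← card_coset I b]
    congr 3
    ext y
    simp only [Finset.mem_filter, Finset.mem_univ, true_and, Set.mem_ofPred_eq]
    refine and_iff_right_of_imp fun hy => ?_
    rw [← sub_sub_sub_cancel_right y x b]
    exact sub_mem (Submodule.mem_sup_right hy) hx
  · rw [Finset.filter_false_of_mem, Finset.card_empty, Nat.cast_zero, zero_div]
    rintro y - ⟨hyx, hyb⟩
    rw [← sub_sub_sub_cancel_left b x y] at hx
    exact hx (sub_mem (Submodule.mem_sup_right hyb) hyx)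

end CosetAverage

section DistortionWeight

/-- The factor by which a distortion step multiplies the mass of a point, where `α` is the
proportion of its coset that is covered and `b` is `1` at covered points and `0` elsewhere. The
case `α = 0` is separate because the last formula would divide by zero there. -/
noncomputable def distortionWeight (δ α b : ℝ) : ℝ :=
  if α < δ then (1 - b) / (1 - α) else if α = 0 then 1 else (α - b * δ) / (α * (1 - δ))

variable {δ α b : ℝ}

lemma distortionWeight_nonneg (hδ : δ ∈ Set.Ico 0 1) (hα : 0 ≤ α) (hb : b ≤ 1) :
    0 ≤ distortionWeight δ α b := by
  obtain ⟨hδ0, hδ1⟩ := hδ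
  unfold distortionWeight
  split_ifs with hlt
  · exact div_nonneg (by linarith) (by linarith)
  · exact zero_le_one
  · have hbδ : b * δ ≤ δ := mul_le_of_le_one_left hδ0 hb
    exact div_nonneg (by linarith) (mul_nonneg hα (by linarith))

lemma distortionWeight_le (hδ : δ ∈ Set.Ico 0 1) (hα : 0 ≤ α) (hb : 0 ≤ b) :
    distortionWeight δ α b ≤ (1 - δ)⁻¹ := by
  obtain ⟨hδ0, hδ1⟩ := hδ
  have hpos : 0 < 1 - δ := sub_pos.2 hδ1
  unfold distortionWeight
  split_ifs with hlt hzero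
  · rw [← one_div]
    exact div_le_div₀ zero_le_one (by linarith) hpos (by linarith)
  · exact (one_le_inv₀ hpos).2 (by linarith)
  · have hden : 0 < α * (1 - δ) := mul_pos (hα.lt_of_ne' hzero) hpos
    rw [div_le_iff₀ hden, mul_comm α, inv_mul_cancel_left₀ hpos.ne']
    exact sub_le_self _ (mul_nonneg hb hδ0)

lemma distortionWeight_self (hδ : δ < 1) (α : ℝ) : distortionWeight δ α α = 1 := by
  unfold distortionWeight
  split_ifs with hlt hzero
  · exact div_self (by linarith)
  · rfl
  · rw [mul_one_sub, div_self]
    rw [← mul_one_sub]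
    exact mul_ne_zero hzero (by linarith)

lemma distortionWeight_eq_affine (δ α b : ℝ) :
    distortionWeight δ α b =
      distortionWeight δ α 0 + (distortionWeight δ α 1 - distortionWeight δ α 0) * b := by
  unfold distortionWeight
  split_ifs <;> ring

end DistortionWeight

section Distortion

variable {S G : Type*} [Ring S] [AddCommGroup G] [Module S G] [Fintype G]

/-- The proportion of the coset `x + A` that lies in `B`. -/
noncomputable def coveredProportion (A : Submodule S G) (B : Set G) (x : G) : ℝ :=
  cosetAvg A (B.indicator 1) x

/-- One distortion step: the density `P` is shifted, inside each coset of `A`, away from `B`. -/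
noncomputable def distort (A : Submodule S G) (B : Set G) (δ : ℝ) (P : G → ℝ) (x : G) : ℝ :=
  P x * distortionWeight δ (coveredProportion A B x) (B.indicator 1 x)

variable {A C : Submodule S G} {B : Set G} {δ : ℝ} {P : G → ℝ}

lemma coveredProportion_nonneg (A : Submodule S G) (B : Set G) (x : G) :
    0 ≤ coveredProportion A B x :=
  Finset.expect_nonneg fun _ _ => Set.indicator_nonneg (fun _ _ => zero_le_one) _

lemma coveredProportion_coe_eq_card_div_card (A : Submodule S G) (B : Finset G) (x : G) :
    coveredProportion A B x =
      (((Finset.univ.filter fun y => y - x ∈ A) ∩ B).card : ℝ) /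
        (Finset.univ.filter fun y => y - x ∈ A).card := by
  rw [coveredProportion, cosetAvg_indicator_one, card_coset, ← Finset.filter_filter,
    ← Finset.filter_mem_eq_inter]
  simp only [Finset.mem_coe]

lemma distort_coe_apply (A : Submodule S G) (B : Finset G) (δ : ℝ) (P : G → ℝ) (x : G) :
    distort A B δ P x =
      if coveredProportion A B x < δ then
        (if x ∈ B then 0 else P x / (1 - coveredProportion A B x))
      else if coveredProportion A B x = 0 then P x
      else P x * (coveredProportion A B x - (if x ∈ B then δ else 0)) /
        (coveredProportion A B x * (1 - δ)) := by
  by_cases hx : x ∈ B <;>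
    simp [distort, distortionWeight, hx, div_eq_mul_inv, mul_assoc]

lemma distort_nonneg (hδ : δ ∈ Set.Ico 0 1) (hP : ∀ x, 0 ≤ P x) (x : G) :
    0 ≤ distort A B δ P x :=
  mul_nonneg (hP x) (distortionWeight_nonneg hδ (coveredProportion_nonneg A B x)
    (Set.indicator_le_self' (fun _ _ => zero_le_one) x))

lemma distort_le (hδ : δ ∈ Set.Ico 0 1) (hP : ∀ x, 0 ≤ P x) (x : G) :
    distort A B δ P x ≤ (1 - δ)⁻¹ * P x := by
  rw [mul_comm]
  exact mul_le_mul_of_nonneg_left (distortionWeight_le hδ (coveredProportion_nonneg A B x)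
    (Set.indicator_nonneg (fun _ _ => zero_le_one) x)) (hP x)

lemma periodic_distort {v : G} (hP : Function.Periodic P v) (hB : Function.Periodic (· ∈ B) v) :
    Function.Periodic (distort A B δ P) v := by
  have hind : Function.Periodic (B.indicator (1 : G → ℝ)) v := fun x => by
    simp only [Set.indicator_apply, Pi.one_apply, hB x]
  intro x
  rw [distort, hP, hind, coveredProportion, periodic_cosetAvg_of_periodic hind]
  rfl

lemma cosetAvg_distort_le (hδ : δ ∈ Set.Ico 0 1) (hP : ∀ x, 0 ≤ P x) (x : G) :
    cosetAvg C (distort A B δ P) x ≤ (1 - δ)⁻¹ * cosetAvg C P x :=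
  (cosetAvg_mono (distort_le hδ hP) x).trans_eq
    (cosetAvg_mul_of_periodic (f := fun _ => (1 - δ)⁻¹) (fun _ _ _ => rfl) P x)

-- On a coset of `A` the weight is an affine function of the indicator of `B`, so its average is its
-- value at the average of that indicator.
lemma cosetAvg_distort (hδ : δ < 1) (hP : ∀ v ∈ A, Function.Periodic P v) (x : G) :
    cosetAvg A (distort A B δ P) x = P x := by
  set w : ℝ → ℝ := distortionWeight δ (coveredProportion A B x) with hw
  have hdistort (v : A) :
      distort A B δ P (x + v) = P x * (w 0 + (w 1 - w 0) * B.indicator 1 (x + v)) := by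
    rw [distort, hP v v.2, coveredProportion, periodic_cosetAvg A _ v v.2,
      distortionWeight_eq_affine]
    rfl
  calc cosetAvg A (distort A B δ P) x
      = 𝔼 v : A, P x * (w 0 + (w 1 - w 0) * B.indicator 1 (x + v)) :=
        Finset.expect_congr rfl fun v _ => hdistort v
    _ = P x * (w 0 + (w 1 - w 0) * coveredProportion A B x) := by
        rw [← Finset.mul_expect, Finset.expect_add_distrib, Fintype.expect_const,
          ← Finset.mul_expect]
        rfl
    _ = P x := by rw [hw, ← distortionWeight_eq_affine, distortionWeight_self hδ, mul_one]

lemma cosetAvg_distort_of_le (hδ : δ < 1) (hP : ∀ v ∈ A, Function.Periodic P v) (hAC : A ≤ C)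
    (x : G) : cosetAvg C (distort A B δ P) x = cosetAvg C P x := by
  rw [← cosetAvg_cosetAvg_of_le hAC, funext (cosetAvg_distort hδ hP)]

/-- The densities produced by the distortion process: starting from the uniform probability
density, step `m + 1` distorts away from `B (m + 1)` inside the cosets of `A m`. -/
noncomputable def distortedMeasure (A : ℕ → Submodule S G) (B : ℕ → Set G) (δ : ℕ → ℝ) :
    ℕ → G → ℝ
  | 0 => fun _ => 1 / Fintype.card G
  | m + 1 => distort (A m) (B (m + 1)) (δ (m + 1)) (distortedMeasure A B δ m)

variable {A : ℕ → Submodule S G} {B : ℕ → Set G} {δ : ℕ → ℝ} {m : ℕ}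

lemma distortedMeasure_nonneg (hδ : ∀ i ∈ Finset.Icc 1 m, δ i ∈ Set.Ico 0 1) (x : G) :
    0 ≤ distortedMeasure A B δ m x := by
  induction m generalizing x with
  | zero => exact one_div_nonneg.2 (Nat.cast_nonneg _)
  | succ m ih =>
    have hsub : Finset.Icc 1 m ⊆ Finset.Icc 1 (m + 1) := Finset.Icc_subset_Icc_right m.le_succ
    exact distort_nonneg (hδ _ (Finset.mem_Icc.2 ⟨m.succ_pos, le_rfl⟩))
      (ih fun i hi => hδ i (hsub hi)) x

lemma periodic_distortedMeasure (hA : Antitone A)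
    (hB : ∀ i ∈ Finset.Icc 1 m, ∀ v ∈ A i, Function.Periodic (· ∈ B i) v) :
    ∀ v ∈ A m, Function.Periodic (distortedMeasure A B δ m) v := by
  induction m with
  | zero => exact fun _ _ _ => rfl
  | succ m ih =>
    have hsub : Finset.Icc 1 m ⊆ Finset.Icc 1 (m + 1) := Finset.Icc_subset_Icc_right m.le_succ
    exact fun v hv => periodic_distort (ih (fun i hi => hB i (hsub hi)) v (hA m.le_succ hv))
      (hB _ (Finset.mem_Icc.2 ⟨m.succ_pos, le_rfl⟩) v hv)

lemma eq_distortedMeasure {B : ℕ → Finset G} {α P : ℕ → G → ℝ}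
    (hα : ∀ i ∈ Finset.Icc 1 m, ∀ x, α i x = coveredProportion (A (i - 1)) (B i) x)
    (hzero : ∀ x, P 0 x = 1 / Fintype.card G)
    (hsucc : ∀ i ∈ Finset.Icc 1 m, ∀ x, P i x =
      if α i x < δ i then (if x ∈ B i then 0 else P (i - 1) x / (1 - α i x))
      else if α i x = 0 then P (i - 1) x
      else P (i - 1) x * (α i x - (if x ∈ B i then δ i else 0)) / (α i x * (1 - δ i))) :
    P m = distortedMeasure A (fun i => B i) δ m := by
  induction m with
  | zero => exact funext hzero
  | succ m ih =>
    have hsub : Finset.Icc 1 m ⊆ Finset.Icc 1 (m + 1) := Finset.Icc_subset_Icc_right m.le_succ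
    have hlast : m + 1 ∈ Finset.Icc 1 (m + 1) := Finset.mem_Icc.2 ⟨m.succ_pos, le_rfl⟩
    funext x
    rw [hsucc _ hlast, hα _ hlast, distortedMeasure, distort_coe_apply,
      ← ih (fun i hi => hα i (hsub hi)) fun i hi => hsucc i (hsub hi)]
    rfl

end Distortion

section CosetUnion

variable {S G ι : Type*} [Ring S] [AddCommGroup G] [Module S G]

/-- The union of the cosets `b i + A i` over `i ∈ T`. -/
def cosetUnion (T : Finset ι) (b : ι → G) (A : ι → Submodule S G) : Set G :=
  {x | ∃ i ∈ T, x - b i ∈ A i}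

lemma periodic_mem_cosetUnion {T : Finset ι} {b : ι → G} {A : ι → Submodule S G} {v : G}
    (hv : ∀ i ∈ T, v ∈ A i) : Function.Periodic (· ∈ cosetUnion T b A) v := fun x =>
  propext <| exists_congr fun i => and_congr_right fun hi => by
    rw [add_sub_right_comm, (A i).add_mem_iff_left (hv i hi)]

lemma coveredProportion_cosetUnion_le [Fintype G] (V : Submodule S G) (T : Finset ι) (b : ι → G)
    (A : ι → Submodule S G) (x : G) :
    coveredProportion V (cosetUnion T b A) x ≤
      ∑ i ∈ T, coveredProportion V {y | y - b i ∈ A i} x := by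
  have hind (y : G) : (cosetUnion T b A).indicator 1 y ≤
      ∑ i ∈ T, ({z | z - b i ∈ A i}.indicator 1 y : ℝ) := by
    have hnonneg : ∀ i ∈ T, (0 : ℝ) ≤ {z | z - b i ∈ A i}.indicator 1 y :=
      fun i _ => Set.indicator_nonneg (fun _ _ => zero_le_one) y
    refine Set.indicator_apply_le' ?_ fun _ => Finset.sum_nonneg hnonneg
    rintro ⟨i, hi, hyi⟩
    exact (Set.indicator_of_mem (s := {z | z - b i ∈ A i}) hyi 1).ge.trans
      (Finset.single_le_sum hnonneg hi)
  calc coveredProportion V (cosetUnion T b A) x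
      ≤ cosetAvg V (fun y => ∑ i ∈ T, {z | z - b i ∈ A i}.indicator 1 y) x := cosetAvg_mono hind x
    _ = ∑ i ∈ T, coveredProportion V {z | z - b i ∈ A i} x := Finset.expect_sum_comm ..

end CosetUnion

section Moments

variable {S G ι κ : Type*} [Ring S] [AddCommGroup G] [Module S G] [Fintype G] [Fintype κ]
  {P : G → ℝ} {H : κ → Submodule S G} {M : ℝ}

lemma sum_inter_cosets_le (hP : ∀ x, 0 ≤ P x) (hM : ∀ c, ∑ x with x - c ∈ ⨅ l, H l, P x ≤ M)
    (c : κ → G) : ∑ x with ∀ l, x - c l ∈ H l, P x ≤ M := by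
  obtain hempty | ⟨x₀, hx₀⟩ :=
    (Finset.univ.filter fun x => ∀ l, x - c l ∈ H l).eq_empty_or_nonempty
  · rw [hempty, Finset.sum_empty]
    exact (Finset.sum_nonneg fun x _ => hP x).trans (hM 0)
  · refine (Finset.sum_congr (Finset.filter_congr fun x _ => ?_) fun _ _ => rfl).trans_le (hM x₀)
    rw [Submodule.mem_iInf]
    refine forall_congr' fun l => ?_
    rw [← sub_add_sub_cancel x x₀ (c l),
      (H l).add_mem_iff_left ((Finset.mem_filter.1 hx₀).2 l)]

lemma sum_prod_card_mul_le (hP : ∀ x, 0 ≤ P x) (hM : ∀ c, ∑ x with x - c ∈ ⨅ l, H l, P x ≤ M)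
    (b : ι → G) {T : κ → Finset ι} {s : ℕ} (hT : ∀ l, (T l).card ≤ s) :
    ∑ x, (∏ l, (((T l).filter fun i => x - b i ∈ H l).card : ℝ)) * P x ≤
      (s : ℝ) ^ Fintype.card κ * M := by
  have hM0 : 0 ≤ M := (Finset.sum_nonneg fun x _ => hP x).trans (hM 0)
  calc ∑ x, (∏ l, (((T l).filter fun i => x - b i ∈ H l).card : ℝ)) * P x
      = ∑ x, ∑ t ∈ Fintype.piFinset T, if ∀ l, x - b (t l) ∈ H l then P x else 0 := by
        refine Finset.sum_congr rfl fun x _ => ?_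
        rw [← Nat.cast_prod, ← Fintype.card_piFinset, ← Finset.sum_filter, Finset.sum_const,
          nsmul_eq_mul]
        congr 3
        ext t
        simp only [Fintype.mem_piFinset, Finset.mem_filter, forall_and]
    _ = ∑ t ∈ Fintype.piFinset T, ∑ x with ∀ l, x - b (t l) ∈ H l, P x := by
        rw [Finset.sum_comm]
        exact Finset.sum_congr rfl fun t _ => (Finset.sum_filter ..).symm
    _ ≤ (Fintype.piFinset T).card • M :=
        Finset.sum_le_card_nsmul _ _ _ fun t _ => sum_inter_cosets_le hP hM fun l => b (t l)
    _ ≤ (s : ℝ) ^ Fintype.card κ * M := by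
        rw [nsmul_eq_mul]
        gcongr
        rw [Fintype.card_piFinset]
        exact_mod_cast Finset.prod_le_pow_card _ _ _ fun l _ => hT l

lemma sum_sum_pow_eq {R α β : Type*} [CommSemiring R] (s : Finset α) (t : α → Finset β)
    (f : α → β → R) (k : ℕ) :
    (∑ a ∈ s, ∑ b ∈ t a, f a b) ^ k =
      ∑ a ∈ Fintype.piFinset fun _ : Fin k => s, ∑ b ∈ Fintype.piFinset fun l => t (a l),
        ∏ l, f (a l) (b l) := by
  rw [Finset.sum_pow']
  exact Finset.sum_congr rfl fun a _ => Finset.prod_univ_sum ..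

end Moments

section SumPow

variable {S G ι ρ θ : Type*} [Ring S] [AddCommGroup G] [Module S G] [Fintype G]

lemma sum_pow_mul_le {P α : G → ℝ} {R : Finset ρ} {D : ρ → Finset θ} {w : ρ → ℝ}
    {K : θ → Submodule S G} {T : ρ → θ → Finset ι} {b : ι → G} {s k : ℕ} {M : (Fin k → θ) → ℝ}
    (hP : ∀ x, 0 ≤ P x) (hw : ∀ r, 0 ≤ w r) (hα : ∀ x, 0 ≤ α x)
    (hαle : ∀ x, α x ≤
      ∑ r ∈ R, ∑ h ∈ D r, w r * ((T r h).filter fun i => x - b i ∈ K h).card)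
    (hT : ∀ r h, (T r h).card ≤ s)
    (hM : ∀ r ∈ Fintype.piFinset fun _ : Fin k => R, ∀ h ∈ Fintype.piFinset fun l => D (r l),
      ∀ c, ∑ x with x - c ∈ ⨅ l, K (h l), P x ≤ M h) :
    ∑ x, α x ^ k * P x ≤
      (s : ℝ) ^ k * ∑ r ∈ Fintype.piFinset fun _ : Fin k => R,
        ∑ h ∈ Fintype.piFinset fun l => D (r l), (∏ l, w (r l)) * M h := by
  set c : ρ → θ → G → ℝ := fun r h x => ((T r h).filter fun i => x - b i ∈ K h).card
  calc ∑ x, α x ^ k * P x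
      ≤ ∑ x, (∑ r ∈ R, ∑ h ∈ D r, w r * c r h x) ^ k * P x :=
        Finset.sum_le_sum fun x _ =>
          mul_le_mul_of_nonneg_right (pow_le_pow_left₀ (hα x) (hαle x) k) (hP x)
    _ = ∑ r ∈ Fintype.piFinset fun _ : Fin k => R, ∑ h ∈ Fintype.piFinset fun l => D (r l),
          (∏ l, w (r l)) * ∑ x, (∏ l, c (r l) (h l) x) * P x := by
        simp only [sum_sum_pow_eq, Finset.prod_mul_distrib, Finset.sum_mul, Finset.mul_sum,
          mul_assoc]
        rw [Finset.sum_comm]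
        exact Finset.sum_congr rfl fun r _ => Finset.sum_comm
    _ ≤ ∑ r ∈ Fintype.piFinset fun _ : Fin k => R, ∑ h ∈ Fintype.piFinset fun l => D (r l),
          (∏ l, w (r l)) * ((s : ℝ) ^ k * M h) := by
        refine Finset.sum_le_sum fun r hr => Finset.sum_le_sum fun h hh =>
          mul_le_mul_of_nonneg_left ?_ (Finset.prod_nonneg fun l _ => hw _)
        simpa only [Fintype.card_fin] using
          sum_prod_card_mul_le hP (hM r hr h hh) b fun l => hT (r l) (h l)
    _ = _ := by simp only [Finset.mul_sum, mul_left_comm]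

end SumPow

lemma sum_le_sum_sum_filter {ι κ : Type*} {s : Finset ι} {t : Finset κ} {φ : κ → ι → Prop}
    {f : ι → ℝ} (hφ : ∀ i ∈ s, ∃ j ∈ t, φ j i) (hf : ∀ i ∈ s, 0 ≤ f i) :
    ∑ i ∈ s, f i ≤ ∑ j ∈ t, ∑ i ∈ s with φ j i, f i := by
  simp only [Finset.sum_filter]
  rw [Finset.sum_comm]
  refine Finset.sum_le_sum fun i hi => ?_
  obtain ⟨j, hj, hij⟩ := hφ i hi
  refine (if_pos hij).ge.trans
    (Finset.single_le_sum (f := fun j => if φ j i then f i else 0) (fun j _ => ?_) hj)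
  exact ite_nonneg (hf i hi) le_rfl

section IdealQuotient

variable {R : Type*} [CommRing R] {Q I V H T : Ideal R}

lemma ne_zero_of_finite_quotient [Infinite R] (Q : Ideal R) [Finite (R ⧸ Q)] : Q ≠ 0 := by
  rintro rfl
  exact not_finite_iff_infinite.2 ‹Infinite R› (Finite.of_equiv _ (RingEquiv.quotientBot R).toEquiv)

lemma card_map_mk_mul_cardQuot (h : Q ≤ I) :
    Nat.card (I.map (Ideal.Quotient.mk Q)) * Submodule.cardQuot I = Nat.card (R ⧸ Q) := by
  rw [Submodule.card_eq_card_quotient_mul_card (I.map (Ideal.Quotient.mk Q)),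
    Nat.card_congr (DoubleQuot.quotQuotEquivQuotOfLE h).toEquiv]
  rfl

lemma map_mk_iInf {κ : Type*} {H : κ → Ideal R} (h : ∀ l, Q ≤ H l) :
    (⨅ l, H l).map (Ideal.Quotient.mk Q) = ⨅ l, (H l).map (Ideal.Quotient.mk Q) := by
  rw [← Ideal.map_iInf_comap_of_surjective _ Ideal.Quotient.mk_surjective]
  simp only [Ideal.comap_map_mk (h _)]

lemma map_mul_sup_map_eq_of_isCoprime {S : Type*} [CommRing S] (f : R →+* S) (hHV : H ∣ V)
    (hTV : IsCoprime T V) : (H * T).map f ⊔ V.map f = H.map f := by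
  refine le_antisymm (sup_le (Ideal.map_mono Ideal.mul_le_left)
    (Ideal.map_mono (Ideal.le_of_dvd hHV))) ?_
  calc H.map f = (H * (T ⊔ V)).map f := by rw [hTV.sup_eq, Ideal.mul_top]
    _ = (H * T).map f ⊔ (H * V).map f := by rw [Ideal.mul_sup, Ideal.map_sup]
    _ ≤ (H * T).map f ⊔ V.map f := sup_le_sup_left (Ideal.map_mono Ideal.mul_le_right) _

-- Modulo `Q`, a coset of `H` is a union of cosets of `H * T` that differ by elements of `V`.
lemma cosetAvg_map_mul_of_periodic [Fintype (R ⧸ Q)] (hHV : H ∣ V) (hTV : IsCoprime T V)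
    {f : R ⧸ Q → ℝ} (hf : ∀ v ∈ V.map (Ideal.Quotient.mk Q), Function.Periodic f v) (x : R ⧸ Q) :
    cosetAvg ((H * T).map (Ideal.Quotient.mk Q)) f x =
      cosetAvg (H.map (Ideal.Quotient.mk Q)) f x := by
  rw [← cosetAvg_sup_of_periodic hf, map_mul_sup_map_eq_of_isCoprime _ hHV hTV]

end IdealQuotient

section Divisibility

lemma exists_eq_mul_pow_of_dvd_mul_pow {M : Type*} [CommMonoidWithZero M] [IsCancelMulZero M]
    [DecompositionMonoid M] [Subsingleton Mˣ] {a b q : M} {e : ℕ} (hq : Prime q)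
    (h : a ∣ b * q ^ e) : ∃ r ≤ e, ∃ c, c ∣ b ∧ a = c * q ^ r := by
  obtain ⟨c, d, hc, hd, rfl⟩ := exists_dvd_and_dvd_of_dvd_mul h
  obtain ⟨r, hr, hdr⟩ := (dvd_prime_pow hq e).1 hd
  exact ⟨r, hr, c, hc, by rw [associated_iff_eq.1 hdr]⟩

lemma exists_finset_mem_iff_dvd_and {M : Type*} [CommMonoidWithZero M]
    [UniqueFactorizationMonoid M] [Finite Mˣ] {b : M} (hb : b ≠ 0) (φ : M → Prop) :
    ∃ D : Finset M, ∀ a, a ∈ D ↔ a ∣ b ∧ φ a := by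
  have := Fintype.ofFinite Mˣ
  have hfinite : {a | a ∣ b}.Finite :=
    Set.finite_coe_iff.1 (UniqueFactorizationMonoid.fintypeSubtypeDvd b hb).finite
  exact ⟨hfinite.toFinset.filter φ, fun a => by
    rw [Finset.mem_filter, hfinite.mem_toFinset, Set.mem_ofPred_eq]⟩

lemma tsum_ite_forall_eq_sum_piFinset {κ β : Type*} [Fintype κ] [DecidableEq κ] {D : κ → Finset β}
    {φ : κ → β → Prop} [∀ H : κ → β, Decidable (∀ l, φ l (H l))]
    (hD : ∀ l b, b ∈ D l ↔ φ l b) (f : (κ → β) → ℝ) :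
    ∑' H : κ → β, (if ∀ l, φ l (H l) then f H else 0) = ∑ H ∈ Fintype.piFinset D, f H := by
  have hmem (H : κ → β) : H ∈ Fintype.piFinset D ↔ ∀ l, φ l (H l) := by
    simp only [Fintype.mem_piFinset, hD]
  rw [tsum_eq_sum fun H hH => if_neg (mt (hmem H).2 hH)]
  exact Finset.sum_congr rfl fun H hH => if_pos ((hmem H).1 hH)

end Divisibility

section PartialModulus

variable {R : Type*} [CommRing R] {p : ℕ → Ideal R} {ν : ℕ → ℕ} {δ : ℕ → ℝ} {H I Q : Ideal R}
  {m n : ℕ}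

/-- The product `Q_j` of the first `j` prime powers `p_i ^ ν_i`. -/
def partialModulus (p : ℕ → Ideal R) (ν : ℕ → ℕ) (j : ℕ) : Ideal R :=
  ∏ i ∈ Finset.Icc 1 j, p i ^ ν i

/-- The image of `Q_j` in `R ⧸ Q`, whose cosets are the fibres of `R ⧸ Q → R ⧸ Q_j`. -/
def reducedModulus (Q : Ideal R) (p : ℕ → Ideal R) (ν : ℕ → ℕ) (j : ℕ) : Ideal (R ⧸ Q) :=
  (partialModulus p ν j).map (Ideal.Quotient.mk Q)

/-- The product of `(1 - δ_i)⁻¹` over those `i ≤ m` with `p_i ∣ H`: the factor by which the first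
`m` distortion steps may enlarge the mass of a residue class modulo `H`. -/
noncomputable def lossFactor (p : ℕ → Ideal R) (δ : ℕ → ℝ) (m : ℕ) (H : Ideal R) : ℝ :=
  ∏ i ∈ (Finset.Icc 1 m).filter (fun i => p i ∣ H), (1 - δ i)⁻¹

lemma partialModulus_succ (p : ℕ → Ideal R) (ν : ℕ → ℕ) (m : ℕ) :
    partialModulus p ν (m + 1) = partialModulus p ν m * p (m + 1) ^ ν (m + 1) :=
  Finset.prod_Icc_succ_top m.succ_pos _

lemma partialModulus_dvd_succ (p : ℕ → Ideal R) (ν : ℕ → ℕ) (m : ℕ) :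
    partialModulus p ν m ∣ partialModulus p ν (m + 1) :=
  ⟨_, partialModulus_succ p ν m⟩

lemma antitone_reducedModulus (Q : Ideal R) (p : ℕ → Ideal R) (ν : ℕ → ℕ) :
    Antitone (reducedModulus Q p ν) :=
  antitone_nat_of_succ_le fun m => Ideal.map_mono (Ideal.le_of_dvd (partialModulus_dvd_succ p ν m))

lemma periodic_mem_cosetUnion_map {ι : Type*} {T : Finset ι} {I : ι → Ideal R}
    (hI : ∀ i ∈ T, I i ∣ partialModulus p ν m) (b : ι → R ⧸ Q) :
    ∀ v ∈ reducedModulus Q p ν m,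
      Function.Periodic (· ∈ cosetUnion T b fun i => (I i).map (Ideal.Quotient.mk Q)) v :=
  fun _ hv => periodic_mem_cosetUnion fun i hi => Ideal.map_mono (Ideal.le_of_dvd (hI i hi)) hv

lemma lossFactor_mono (hδ : ∀ i ∈ Finset.Icc 1 n, δ i ∈ Set.Ico 0 1) (hmn : m ≤ n) (h : H ∣ I) :
    lossFactor p δ m H ≤ lossFactor p δ n I := by
  have hone : ∀ i ∈ Finset.Icc 1 n, 1 ≤ (1 - δ i)⁻¹ := fun i hi =>
    (one_le_inv₀ (sub_pos.2 (hδ i hi).2)).2 (sub_le_self 1 (hδ i hi).1)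
  have hsub : (Finset.Icc 1 m).filter (fun i => p i ∣ H) ⊆
      (Finset.Icc 1 n).filter (fun i => p i ∣ I) := fun i hi =>
    Finset.mem_filter.2 ⟨Finset.Icc_subset_Icc_right hmn (Finset.mem_of_mem_filter i hi),
      (Finset.mem_filter.1 hi).2.trans h⟩
  exact Finset.prod_le_prod_of_subset_of_one_le hsub
    (fun i hi => zero_le_one.trans (hone i (Finset.mem_of_mem_filter i (hsub hi))))
    fun i hi _ => hone i (Finset.mem_of_mem_filter i hi)

lemma lossFactor_succ_of_dvd (h : p (m + 1) ∣ H) :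
    lossFactor p δ (m + 1) H = (1 - δ (m + 1))⁻¹ * lossFactor p δ m H := by
  simp only [lossFactor, Finset.prod_filter, Finset.prod_Icc_succ_top m.succ_pos, if_pos h,
    mul_comm]

end PartialModulus

section DedekindDomain

variable {R : Type*} [CommRing R] [IsDedekindDomain R] {p : ℕ → Ideal R} {ν : ℕ → ℕ}
  {δ : ℕ → ℝ} {q H V Q : Ideal R} {m : ℕ}

lemma isCoprime_of_prime_of_ne (hH : Prime H) (hq : Prime q) (h : H ≠ q) : IsCoprime H q :=
  have := (Ideal.isPrime_of_prime hH).isMaximal hH.ne_zero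
  have := (Ideal.isPrime_of_prime hq).isMaximal hq.ne_zero
  Ideal.isCoprime_of_isMaximal h

lemma cardQuot_mul_prime_pow (hq : Prime q) (h : IsCoprime H q) (r : ℕ) :
    (H * q ^ r).cardQuot = H.cardQuot * q.cardQuot ^ r := by
  have := Ideal.isPrime_of_prime hq
  rw [cardQuot_mul_of_coprime h.pow_right, cardQuot_pow_of_prime hq.ne_zero]

lemma partialModulus_ne_zero (hp : ∀ i ∈ Finset.Icc 1 m, Prime (p i)) :
    partialModulus p ν m ≠ 0 :=
  Finset.prod_ne_zero_iff.2 fun i hi => pow_ne_zero _ (hp i hi).ne_zero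

lemma prime_of_partialModulus_ne_zero (h : partialModulus p ν m ≠ 0)
    (hp : ∀ i ∈ Finset.Icc 1 m, (p i).IsPrime) (hν : ∀ i ∈ Finset.Icc 1 m, 1 ≤ ν i) :
    ∀ i ∈ Finset.Icc 1 m, Prime (p i) := fun i hi =>
  have hdvd : p i ∣ p i ^ ν i := dvd_pow_self _ (Nat.one_le_iff_ne_zero.1 (hν i hi))
  Ideal.prime_of_isPrime (ne_zero_of_dvd_ne_zero h
    (hdvd.trans (Finset.dvd_prod_of_mem (fun i => p i ^ ν i) hi))) (hp i hi)

lemma isCoprime_partialModulus (hp : ∀ i ∈ Finset.Icc 1 (m + 1), Prime (p i))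
    (hinj : Set.InjOn p (Finset.Icc 1 (m + 1))) :
    IsCoprime (p (m + 1)) (partialModulus p ν m) := by
  have hlast : m + 1 ∈ Finset.Icc 1 (m + 1) := Finset.mem_Icc.2 ⟨m.succ_pos, le_rfl⟩
  refine IsCoprime.prod_right fun i hi => IsCoprime.pow_right ?_
  have hi' : i ∈ Finset.Icc 1 (m + 1) := Finset.Icc_subset_Icc_right m.le_succ hi
  refine isCoprime_of_prime_of_ne (hp _ hlast) (hp i hi') fun heq => ?_
  exact (Nat.lt_succ_of_le (Finset.mem_Icc.1 hi).2).ne' (hinj hlast hi' heq)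

lemma dvd_partialModulus_of_forall_not_dvd {I : Ideal R} {j J : ℕ}
    (hp : ∀ i ∈ Finset.Icc 1 J, Prime (p i)) (hI : I ∣ partialModulus p ν J) (hjJ : j ≤ J)
    (hdvd : ∀ i ∈ Finset.Icc 1 J, j < i → ¬ p i ∣ I) : I ∣ partialModulus p ν j := by
  have hsub : Finset.Icc 1 j ⊆ Finset.Icc 1 J := Finset.Icc_subset_Icc_right hjJ
  rw [partialModulus, ← Finset.prod_sdiff hsub] at hI
  refine IsRelPrime.dvd_of_dvd_mul_left (IsRelPrime.prod_right fun i hi => ?_) hI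
  obtain ⟨hiJ, hij⟩ := Finset.mem_sdiff.1 hi
  have hlt : j < i := not_le.1 fun h => hij (Finset.mem_Icc.2 ⟨(Finset.mem_Icc.1 hiJ).1, h⟩)
  exact (((hp i hiJ).irreducible.isRelPrime_iff_not_dvd.2 (hdvd i hiJ hlt)).symm).pow_right

lemma card_map_div_card_map [Finite (R ⧸ Q)] {r : ℕ} (hq : Prime q) (hHq : IsCoprime H q)
    (hQ : H * q ^ r ∣ Q) :
    (Nat.card ((H * q ^ r).map (Ideal.Quotient.mk Q)) : ℝ) /
      Nat.card (H.map (Ideal.Quotient.mk Q)) = ((q.cardQuot : ℝ) ^ r)⁻¹ := by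
  have hI : Nat.card ((H * q ^ r).map (Ideal.Quotient.mk Q)) * (H.cardQuot * q.cardQuot ^ r) =
      Nat.card (R ⧸ Q) := by
    rw [← cardQuot_mul_prime_pow hq hHq, card_map_mk_mul_cardQuot (Ideal.le_of_dvd hQ)]
  have hH := card_map_mk_mul_cardQuot (Ideal.le_of_dvd ((dvd_mul_right H _).trans hQ))
  have hne : Nat.card (R ⧸ Q) ≠ 0 := Nat.card_pos.ne'
  have hratio : Nat.card (H.map (Ideal.Quotient.mk Q)) =
      Nat.card ((H * q ^ r).map (Ideal.Quotient.mk Q)) * q.cardQuot ^ r := by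
    refine Nat.eq_of_mul_eq_mul_right (Nat.pos_of_ne_zero (right_ne_zero_of_mul (hH.trans_ne hne)))
      ?_
    rw [hH, ← hI, mul_right_comm, mul_assoc]
  rw [hratio, Nat.cast_mul, Nat.cast_pow,
    div_mul_cancel_left₀ (Nat.cast_ne_zero.2 (left_ne_zero_of_mul (hI.trans_ne hne)))]

variable [Fintype (R ⧸ Q)] {B : ℕ → Set (R ⧸ Q)}

-- If `p (m + 1)` does not divide `H`, then `H` contains the modulus of the last step, which
-- therefore preserves the averages over its cosets. If it does, the last step costs a factor
-- `(1 - δ (m + 1))⁻¹`, and the power of `p (m + 1)` in `H` is invisible to the preceding measure.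
lemma cosetAvg_distortedMeasure_le (hp : ∀ i ∈ Finset.Icc 1 m, Prime (p i))
    (hinj : Set.InjOn p (Finset.Icc 1 m)) (hδ : ∀ i ∈ Finset.Icc 1 m, δ i ∈ Set.Ico 0 1)
    (hB : ∀ i ∈ Finset.Icc 1 m, ∀ v ∈ reducedModulus Q p ν i, Function.Periodic (· ∈ B i) v) :
    ∀ H, H ∣ partialModulus p ν m → ∀ x,
      cosetAvg (H.map (Ideal.Quotient.mk Q)) (distortedMeasure (reducedModulus Q p ν) B δ m) x ≤
        lossFactor p δ m H / Fintype.card (R ⧸ Q) := by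
  induction m with
  | zero =>
    intro H _ x
    rw [cosetAvg_of_periodic fun _ _ _ => rfl]
    simp [distortedMeasure, lossFactor]
  | succ m ih =>
    have hlast : m + 1 ∈ Finset.Icc 1 (m + 1) := Finset.mem_Icc.2 ⟨m.succ_pos, le_rfl⟩
    have hsub : Finset.Icc 1 m ⊆ Finset.Icc 1 (m + 1) := Finset.Icc_subset_Icc_right m.le_succ
    have hper : ∀ v ∈ reducedModulus Q p ν m,
        Function.Periodic (distortedMeasure (reducedModulus Q p ν) B δ m) v :=
      periodic_distortedMeasure (antitone_reducedModulus Q p ν) fun i hi => hB i (hsub hi)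
    specialize ih (fun i hi => hp i (hsub hi)) (hinj.mono (Finset.coe_subset.2 hsub))
      (fun i hi => hδ i (hsub hi)) (fun i hi => hB i (hsub hi))
    rw [partialModulus_succ]
    intro _ hH x
    obtain ⟨r, -, H, hHm, rfl⟩ := exists_eq_mul_pow_of_dvd_mul_pow (hp _ hlast) hH
    rcases r.eq_zero_or_pos with rfl | hr
    · rw [pow_zero, mul_one, distortedMeasure, cosetAvg_distort_of_le (hδ _ hlast).2 hper
        (Ideal.map_mono (Ideal.le_of_dvd hHm))]
      refine (ih H hHm x).trans ?_
      gcongr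
      exact lossFactor_mono hδ m.le_succ dvd_rfl
    · have hpos : 0 ≤ (1 - δ (m + 1))⁻¹ := inv_nonneg.2 (sub_nonneg.2 (hδ _ hlast).2.le)
      rw [lossFactor_succ_of_dvd (dvd_mul_of_dvd_right (dvd_pow_self _ hr.ne') H), mul_div_assoc]
      refine (cosetAvg_distort_le (hδ _ hlast)
        (distortedMeasure_nonneg fun i hi => hδ i (hsub hi)) x).trans ?_
      rw [cosetAvg_map_mul_of_periodic hHm (isCoprime_partialModulus hp hinj).pow_left hper]
      refine mul_le_mul_of_nonneg_left ((ih H hHm x).trans ?_) hpos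
      gcongr
      exact lossFactor_mono (fun i hi => hδ i (hsub hi)) le_rfl (dvd_mul_right H _)

lemma sum_coset_distortedMeasure_le (hp : ∀ i ∈ Finset.Icc 1 m, Prime (p i))
    (hinj : Set.InjOn p (Finset.Icc 1 m)) (hδ : ∀ i ∈ Finset.Icc 1 m, δ i ∈ Set.Ico 0 1)
    (hQ : partialModulus p ν m ∣ Q)
    (hB : ∀ i ∈ Finset.Icc 1 m, ∀ v ∈ reducedModulus Q p ν i, Function.Periodic (· ∈ B i) v)
    (hH : H ∣ partialModulus p ν m) (c : R ⧸ Q) :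
    ∑ x with x - c ∈ H.map (Ideal.Quotient.mk Q),
        distortedMeasure (reducedModulus Q p ν) B δ m x ≤ lossFactor p δ m H / H.cardQuot := by
  have hcard : (Nat.card (H.map (Ideal.Quotient.mk Q)) : ℝ) * H.cardQuot =
      Fintype.card (R ⧸ Q) := by
    rw [← Nat.card_eq_fintype_card]
    exact_mod_cast card_map_mk_mul_cardQuot (Ideal.le_of_dvd (hH.trans hQ))
  have hne : (Nat.card (H.map (Ideal.Quotient.mk Q)) : ℝ) ≠ 0 :=
    Nat.cast_ne_zero.2 Nat.card_pos.ne'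
  rw [sum_coset_eq_card_mul_cosetAvg, ← mul_div_mul_left _ _ hne, hcard, mul_div_assoc]
  exact mul_le_mul_of_nonneg_left (cosetAvg_distortedMeasure_le hp hinj hδ hB H hH c)
    (Nat.cast_nonneg _)

lemma exists_eq_mul_pow_of_dvd {I : Ideal R} {e : ℕ} (hq : Prime q) (hqV : IsCoprime q V)
    (hqI : q ∣ I) (hIV : I ∣ V * q ^ e) : ∃ r ∈ Finset.Icc 1 e, ∃ H, H ∣ V ∧ I = H * q ^ r := by
  obtain ⟨r, hre, H, hHV, rfl⟩ := exists_eq_mul_pow_of_dvd_mul_pow hq hIV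
  refine ⟨r, Finset.mem_Icc.2 ⟨Nat.one_le_iff_ne_zero.2 ?_, hre⟩, H, hHV, rfl⟩
  rintro rfl
  rw [pow_zero, mul_one] at hqI
  exact hq.not_isUnit (hqV.isUnit_of_dvd' dvd_rfl (hqI.trans hHV))

lemma coveredProportion_coset_mul_pow {r : ℕ} (hq : Prime q) (hqV : IsCoprime q V) (hHV : H ∣ V)
    (hQ : H * q ^ r ∣ Q) (b x : R ⧸ Q) :
    coveredProportion (V.map (Ideal.Quotient.mk Q))
        {y | y - b ∈ (H * q ^ r).map (Ideal.Quotient.mk Q)} x =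
      ((q.cardQuot : ℝ) ^ r)⁻¹ * if x - b ∈ H.map (Ideal.Quotient.mk Q) then 1 else 0 := by
  rw [coveredProportion, cosetAvg_indicator_coset, sup_comm,
    map_mul_sup_map_eq_of_isCoprime _ hHV hqV.pow_left,
    card_map_div_card_map hq (hqV.of_isCoprime_of_dvd_right hHV).symm hQ, mul_ite, mul_one,
    mul_zero]

lemma coveredProportion_cosetUnion_le_sum {ι : Type*} {T : Finset ι} {I : ι → Ideal R} {e N : ℕ}
    {D : ℕ → Finset (Ideal R)} (hq : Prime q) (hqV : IsCoprime q V) (b : ι → R ⧸ Q)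
    (hI : ∀ i ∈ T, q ∣ I i ∧ I i ∣ V * q ^ e ∧ I i ∣ Q ∧ N ≤ (I i).cardQuot)
    (hD : ∀ r H, H ∈ D r ↔ H ∣ V ∧ N ≤ (H * q ^ r).cardQuot) (x : R ⧸ Q) :
    coveredProportion (V.map (Ideal.Quotient.mk Q))
        (cosetUnion T b fun i => (I i).map (Ideal.Quotient.mk Q)) x ≤
      ∑ r ∈ Finset.Icc 1 e, ∑ H ∈ D r, ((q.cardQuot : ℝ) ^ r)⁻¹ *
        ((T.filter fun i => I i = H * q ^ r).filter
          fun i => x - b i ∈ H.map (Ideal.Quotient.mk Q)).card := by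
  set c : ι → ℝ := fun i => coveredProportion (V.map (Ideal.Quotient.mk Q))
    {y | y - b i ∈ (I i).map (Ideal.Quotient.mk Q)} x with hc
  have hsplit : ∀ i ∈ T, ∃ j ∈ (Finset.Icc 1 e).sigma D, I i = j.2 * q ^ j.1 := fun i hi => by
    obtain ⟨hqI, hIV, -, hN⟩ := hI i hi
    obtain ⟨r, hr, H, hHV, hIH⟩ := exists_eq_mul_pow_of_dvd hq hqV hqI hIV
    exact ⟨⟨r, H⟩, Finset.mem_sigma.2 ⟨hr, (hD r H).2 ⟨hHV, hIH ▸ hN⟩⟩, hIH⟩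
  calc coveredProportion (V.map (Ideal.Quotient.mk Q))
        (cosetUnion T b fun i => (I i).map (Ideal.Quotient.mk Q)) x
      ≤ ∑ i ∈ T, c i := coveredProportion_cosetUnion_le _ T b _ x
    _ ≤ ∑ j ∈ (Finset.Icc 1 e).sigma D, ∑ i ∈ T with I i = j.2 * q ^ j.1, c i :=
        sum_le_sum_sum_filter hsplit fun i _ => coveredProportion_nonneg _ _ x
    _ = ∑ r ∈ Finset.Icc 1 e, ∑ H ∈ D r, ∑ i ∈ T with I i = H * q ^ r, c i :=
        Finset.sum_sigma ..
    _ = _ := Finset.sum_congr rfl fun r _ => Finset.sum_congr rfl fun H hH => by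
        rw [← Finset.sum_boole, Finset.mul_sum]
        refine Finset.sum_congr rfl fun i hi => ?_
        obtain ⟨hiT, hIH⟩ := Finset.mem_filter.1 hi
        simp only [hc, hIH]
        exact coveredProportion_coset_mul_pow hq hqV ((hD r H).1 hH).1
          (hIH ▸ (hI i hiT).2.2.1) (b i) x

/-- Here `m + 1` is the index `j` of the paper, `T` indexes the congruence classes covered at that
step, and `N` plays the role of `N(I_1)`. -/
theorem kth_moment_bound_general {ι : Type*} {T : Finset ι} {I : ι → Ideal R} {N s : ℕ}
    (hp : ∀ i ∈ Finset.Icc 1 (m + 1), Prime (p i)) (hinj : Set.InjOn p (Finset.Icc 1 (m + 1)))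
    (hQ : partialModulus p ν m ∣ Q) (hδ : ∀ i ∈ Finset.Icc 1 m, δ i ∈ Set.Ico 0 1)
    (hB : ∀ i ∈ Finset.Icc 1 m, ∀ v ∈ reducedModulus Q p ν i, Function.Periodic (· ∈ B i) v)
    (hI : ∀ i ∈ T, p (m + 1) ∣ I i ∧ I i ∣ partialModulus p ν (m + 1) ∧ I i ∣ Q ∧
      N ≤ (I i).cardQuot)
    (hs : ∀ I₀, (T.filter fun i => I i = I₀).card ≤ s) (b : ι → R ⧸ Q) (k : ℕ) :
    ∑ x, coveredProportion (reducedModulus Q p ν m)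
        (cosetUnion T b fun i => (I i).map (Ideal.Quotient.mk Q)) x ^ k *
          distortedMeasure (reducedModulus Q p ν) B δ m x ≤
      (s : ℝ) ^ k * ∑ r ∈ Fintype.piFinset fun _ : Fin k => Finset.Icc 1 (ν (m + 1)),
        ∑' H : Fin k → Ideal R,
          if ∀ l, H l ∣ partialModulus p ν m ∧ N ≤ (H l * p (m + 1) ^ r l).cardQuot then
            1 / (((⨅ l, H l).cardQuot : ℝ) * ((p (m + 1)).cardQuot : ℝ) ^ ∑ l, r l) *
              lossFactor p δ m (⨅ l, H l)
          else 0 := by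
  have hsub : Finset.Icc 1 m ⊆ Finset.Icc 1 (m + 1) := Finset.Icc_subset_Icc_right m.le_succ
  have hpm : ∀ i ∈ Finset.Icc 1 m, Prime (p i) := fun i hi => hp i (hsub hi)
  have hq : Prime (p (m + 1)) := hp _ (Finset.mem_Icc.2 ⟨m.succ_pos, le_rfl⟩)
  choose D hD using fun r => exists_finset_mem_iff_dvd_and (partialModulus_ne_zero (ν := ν) hpm)
    fun H => N ≤ (H * p (m + 1) ^ r).cardQuot
  have hM : ∀ r ∈ Fintype.piFinset fun _ : Fin k => Finset.Icc 1 (ν (m + 1)),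
      ∀ H ∈ Fintype.piFinset fun l => D (r l), ∀ c,
        ∑ x with x - c ∈ ⨅ l, (H l).map (Ideal.Quotient.mk Q),
          distortedMeasure (reducedModulus Q p ν) B δ m x ≤
            lossFactor p δ m (⨅ l, H l) / (⨅ l, H l).cardQuot := by
    intro r _ H hH c
    have hHV (l) : H l ∣ partialModulus p ν m := ((hD _ _).1 (Fintype.mem_piFinset.1 hH l)).1
    rw [← map_mk_iInf fun l => Ideal.le_of_dvd ((hHV l).trans hQ)]
    exact sum_coset_distortedMeasure_le hpm (hinj.mono (Finset.coe_subset.2 hsub)) hδ hQ hB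
      (Ideal.dvd_iff_le.2 (le_iInf fun l => Ideal.le_of_dvd (hHV l))) c
  refine (sum_pow_mul_le (distortedMeasure_nonneg hδ)
    (fun r => inv_nonneg.2 (pow_nonneg (Nat.cast_nonneg _) r)) (coveredProportion_nonneg _ _)
    (coveredProportion_cosetUnion_le_sum hq (isCoprime_partialModulus hp hinj) b
      (by simpa only [partialModulus_succ] using hI) hD) (fun _ _ => hs _) hM).trans_eq ?_
  refine congrArg _ (Finset.sum_congr rfl fun r _ => ?_)
  rw [tsum_ite_forall_eq_sum_piFinset (fun l => hD (r l))]
  refine Finset.sum_congr rfl fun H _ => ?_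
  rw [Finset.prod_inv_distrib, Finset.prod_pow_eq_pow_sum]
  ring

end DedekindDomain

section NumberField

variable {K : Type*} [Field K] [NumberField K] {p : ℕ → Ideal (𝓞 K)} {ν : ℕ → ℕ}

lemma dvd_partialModulus_of_isPmin {I : Ideal (𝓞 K)} {j J : ℕ}
    (hp : ∀ i ∈ Finset.Icc 1 J, Prime (p i)) (hinj : Set.InjOn p (Finset.Icc 1 J))
    (hmono : ∀ i ∈ Finset.Icc 1 J, j ≤ i → Ideal.absNorm (p j) ≤ Ideal.absNorm (p i))
    (hj : j ∈ Finset.Icc 1 J) (hI : I ∣ partialModulus p ν J) (hmin : IsPmin I (p j)) :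
    I ∣ partialModulus p ν j :=
  dvd_partialModulus_of_forall_not_dvd hp hI (Finset.mem_Icc.1 hj).2 fun i hi hji hdvd =>
    (hmono i hi hji.le).not_gt <| hmin.2.2 (p i) (Ideal.isPrime_of_prime (hp i hi)) hdvd
      fun h => hji.ne' (hinj hi hj h)

end NumberField

/-- Bound for the `k`-th moment. -/
theorem kth_moment_bound
    {K : Type*} [Field K] [NumberField K]
    (n : ℕ) (hn : 0 < n)
    (a : Fin n → 𝓞 K) (Idl : Fin n → Ideal (𝓞 K))
    (hdist : ∀ i : Fin n, Distinguishable (Idl i))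
    (hmono : ∀ i j : Fin n, i ≤ j → Ideal.absNorm (Idl i) ≤ Ideal.absNorm (Idl j))
    (s : ℕ)
    (hsle : ∀ I₀ : Ideal (𝓞 K), (Finset.univ.filter fun i : Fin n => Idl i = I₀).card ≤ s)
    (hseq : ∃ I₀ : Ideal (𝓞 K), (Finset.univ.filter fun i : Fin n => Idl i = I₀).card = s)
    (Q : Ideal (𝓞 K)) (hQ : Q = ⨅ i : Fin n, Idl i)
    (J : ℕ) (p : ℕ → Ideal (𝓞 K)) (ν : ℕ → ℕ)
    (hp : ∀ j ∈ Finset.Icc 1 J, (p j).IsPrime)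
    (hν : ∀ j ∈ Finset.Icc 1 J, 1 ≤ ν j)
    (hpinj : ∀ j ∈ Finset.Icc 1 J, ∀ j' ∈ Finset.Icc 1 J, p j = p j' → j = j')
    (hfact : Q = ∏ j ∈ Finset.Icc 1 J, p j ^ ν j)
    (hpmono : ∀ j ∈ Finset.Icc 1 J, ∀ j' ∈ Finset.Icc 1 J, j ≤ j' →
      Ideal.absNorm (p j) ≤ Ideal.absNorm (p j'))
    (Qp : ℕ → Ideal (𝓞 K)) (hQp : ∀ j : ℕ, Qp j = ∏ i ∈ Finset.Icc 1 j, p i ^ ν i)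
    [Fintype (𝓞 K ⧸ Q)]
    (B : ℕ → Finset (𝓞 K ⧸ Q))
    (hB : ∀ j ∈ Finset.Icc 1 J, B j = Finset.univ.filter fun x : 𝓞 K ⧸ Q =>
      ∃ i : Fin n, IsPmin (Idl i) (p j) ∧
        x - Ideal.Quotient.mk Q (a i) ∈ (Idl i).map (Ideal.Quotient.mk Q))
    (F : ℕ → (𝓞 K ⧸ Q) → Finset (𝓞 K ⧸ Q))
    (hF : ∀ (j : ℕ) (x : 𝓞 K ⧸ Q),
      F j x = Finset.univ.filter fun x' : 𝓞 K ⧸ Q => x' - x ∈ (Qp j).map (Ideal.Quotient.mk Q))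
    (α : ℕ → (𝓞 K ⧸ Q) → ℝ)
    (hα : ∀ j ∈ Finset.Icc 1 J, ∀ x : 𝓞 K ⧸ Q,
      α j x = ((F (j - 1) x ∩ B j).card : ℝ) / ((F (j - 1) x).card : ℝ))
    (δ : ℕ → ℝ) (hδ : ∀ j ∈ Finset.Icc 1 J, δ j ∈ Set.Icc (0 : ℝ) (1 / 2))
    (P : ℕ → (𝓞 K ⧸ Q) → ℝ)
    (hP0 : ∀ x : 𝓞 K ⧸ Q, P 0 x = 1 / (Fintype.card (𝓞 K ⧸ Q) : ℝ))
    (hPrec : ∀ j ∈ Finset.Icc 1 J, ∀ x : 𝓞 K ⧸ Q,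
      P j x = if α j x < δ j then (if x ∈ B j then 0 else P (j - 1) x / (1 - α j x))
        else if α j x = 0 then P (j - 1) x
        else P (j - 1) x * (α j x - (if x ∈ B j then δ j else 0)) / (α j x * (1 - δ j)))
    (k : ℕ) (hk : 1 ≤ k) (j : ℕ) (hj : j ∈ Finset.Icc 1 J) :
    ∑ x : 𝓞 K ⧸ Q, (α j x) ^ k * P (j - 1) x ≤
      (s : ℝ) ^ k *
        ∑ r ∈ Fintype.piFinset (fun _ : Fin k => Finset.Icc 1 (ν j)),
          ∑' H : Fin k → Ideal (𝓞 K),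
            (if ∀ ℓ : Fin k, H ℓ ∣ Qp (j - 1) ∧
                Ideal.absNorm (Idl ⟨0, hn⟩) ≤ Ideal.absNorm (H ℓ * p j ^ r ℓ)
             then (1 / ((Ideal.absNorm (⨅ ℓ : Fin k, H ℓ) : ℝ) *
                    (Ideal.absNorm (p j) : ℝ) ^ (∑ ℓ : Fin k, r ℓ))) *
                  ∏ i ∈ (Finset.Icc 1 (j - 1)).filter (fun i => p i ∣ ⨅ ℓ : Fin k, H ℓ),
                    (1 - δ i)⁻¹
             else 0) := by
  obtain ⟨m, rfl⟩ := Nat.exists_eq_add_of_le' (Finset.mem_Icc.1 hj).1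
  obtain rfl : Qp = partialModulus p ν := funext hQp
  have hsub := Finset.Icc_subset_Icc_right (a := 1) (Finset.mem_Icc.1 hj).2
  have hsubm := (Finset.Icc_subset_Icc_right m.le_succ).trans hsub
  have hprime := prime_of_partialModulus_ne_zero
    (hfact.symm.trans_ne (ne_zero_of_finite_quotient Q)) hp hν
  have hdvd (l : Fin n) : Idl l ∣ Q := Ideal.dvd_iff_le.2 (hQ ▸ iInf_le Idl l)
  let T (i : ℕ) : Finset (Fin n) := {l | IsPmin (Idl l) (p i)}
  have hT : ∀ i ∈ Finset.Icc 1 J, ∀ l ∈ T i, p i ∣ Idl l ∧ Idl l ∣ partialModulus p ν i :=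
    fun i hi l hl =>
      ⟨(Finset.mem_filter.1 hl).2.2.1, dvd_partialModulus_of_isPmin hprime hpinj (hpmono i hi) hi
        ((hdvd l).trans hfact.dvd) (Finset.mem_filter.1 hl).2⟩
  have hBunion : ∀ i ∈ Finset.Icc 1 J, (B i : Set (𝓞 K ⧸ Q)) =
      cosetUnion (T i) (fun l => Ideal.Quotient.mk Q (a l))
        fun l => (Idl l).map (Ideal.Quotient.mk Q) := fun i hi => by simp [hB i hi, T, cosetUnion]
  have hαprop : ∀ i ∈ Finset.Icc 1 J, ∀ x,
      α i x = coveredProportion (reducedModulus Q p ν (i - 1)) (B i) x := fun i hi x => by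
    simp only [hα i hi, hF, coveredProportion_coe_eq_card_div_card, reducedModulus]
  have hPdist := eq_distortedMeasure (fun i hi => hαprop i (hsubm hi)) hP0
    fun i hi => hPrec i (hsubm hi)
  simp only [hαprop _ hj, hPdist, Nat.add_sub_cancel, hBunion _ hj]
  exact kth_moment_bound_general (fun i hi => hprime i (hsub hi))
    (Set.InjOn.mono (Finset.coe_subset.2 hsub) hpinj)
    ((Finset.prod_dvd_prod_of_subset _ _ _ hsubm).trans hfact.symm.dvd)
    (fun i hi => ⟨(hδ i (hsubm hi)).1, (hδ i (hsubm hi)).2.trans_lt one_half_lt_one⟩)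
    (fun i hi => hBunion i (hsubm hi) ▸
      periodic_mem_cosetUnion_map (fun l hl => (hT i (hsubm hi) l hl).2) _)
    (fun l hl => ⟨(hT _ hj l hl).1, (hT _ hj l hl).2, hdvd l, hmono _ l (Nat.zero_le _)⟩)
    (fun I₀ => (Finset.card_mono (Finset.filter_subset_filter _ (T _).subset_univ)).trans
      (hsle I₀)) _ k
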